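/- Let T > 0, A > 0, R > 0, and let k : (0, T) → [0, ∞) be measurable with finite weak-L¹ quasinorm satisfying 2A‖k‖_{1,∞} < 1. Let φ : [0, T] → [0, ∞) be continuous and suppose that for every ε ∈ (0, 1) one has φ(t) ≤ R + A ∫_0^t k(σ)^{1−ε} φ(σ)^{1+2ε} dσ for all t ∈ [0, T]. Then φ is bounded on [0, T]; in fact, for any δ ∈ (0, 1/3) with 2A‖k‖_{1,∞} < 1 − 3δ and any ε ∈ (0,1) such that 1 − δ < R^{−2ε} and 2AεT < δ, one has φ(t) ≤ δ^{−1/(2ε)} for all t ∈ [0, T]. -/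

import Mathlib

open MeasureTheory Set ENNReal intervalIntegral

/-- The weak-`L^p` (Marcinkiewicz) quasinorm
`‖f‖_{p,∞} = sup {α · d_f(α)^(1/p) : α > 0}`, where
`d_f(α) = μ {x | |f x| > α}` is the distribution function of `f`. -/
noncomputable def weakLpNorm {X : Type*} [MeasurableSpace X]
    (μ : Measure X) (p : ℝ) (f : X → ℝ) : ℝ≥0∞ :=
  ⨆ (α : ℝ) (_ : 0 < α), ENNReal.ofReal α * (μ {x | α < |f x|}) ^ (1 / p)

/-!
The layer-cake formula bounds `∫ k ^ (1 - ε)` over `(0, T)` by `T + ‖k‖_{1,∞} / ε`. The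
Bihari–LaSalle comparison for the nonlinearity `y ↦ y ^ (1 + 2ε)` multiplies this integral by `2ε`,
which absorbs the factor `1 / ε`: the right-hand side `Y ≥ φ` of the integral inequality satisfies
`R ^ (-2ε) - Y t ^ (-2ε) ≤ 2εA ∫ k ^ (1 - ε) ≤ 2εAT + 2A‖k‖_{1,∞} < 1 - 2δ`,
and `1 - δ < R ^ (-2ε)` leaves `δ < Y t ^ (-2ε)`.
-/

section WeakLp

variable {X : Type*} [MeasurableSpace X] {μ : Measure X} {f : X → ℝ} {p q : ℝ}

theorem meas_lt_abs_le_weakLpNorm_rpow_mul (hp : 0 < p) {α : ℝ} (hα : 0 < α) :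
    μ {x | α < |f x|} ≤ weakLpNorm μ p f ^ p * ENNReal.ofReal (α ^ (-p)) := by
  have hsup : ENNReal.ofReal α * μ {x | α < |f x|} ^ (1 / p) ≤ weakLpNorm μ p f :=
    le_iSup₂ (f := fun (β : ℝ) (_ : 0 < β) =>
      ENNReal.ofReal β * μ {x | β < |f x|} ^ (1 / p)) α hα
  have hpow := ENNReal.rpow_le_rpow hsup hp.le
  rw [ENNReal.mul_rpow_of_nonneg _ _ hp.le, ← ENNReal.rpow_mul, one_div_mul_cancel hp.ne',
    ENNReal.rpow_one, mul_comm] at hpow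
  rwa [← ENNReal.ofReal_rpow_of_pos hα, ENNReal.rpow_neg, ← div_eq_mul_inv,
    ENNReal.le_div_iff_mul_le (by simp [hα]) (by simp [hp.le])]

theorem lintegral_Ioc_zero_one_rpow_sub_one (hq : 0 < q) :
    ∫⁻ t in Ioc (0 : ℝ) 1, ENNReal.ofReal (t ^ (q - 1)) = ENNReal.ofReal (1 / q) := by
  have hint : IntegrableOn (fun t : ℝ => t ^ (q - 1)) (Ioc 0 1) :=
    (intervalIntegrable_iff_integrableOn_Ioc_of_le zero_le_one).1
      (intervalIntegrable_rpow' (by linarith))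
  rw [← ofReal_integral_eq_lintegral_ofReal hint
    (ae_restrict_of_forall_mem measurableSet_Ioc fun t ht => Real.rpow_nonneg ht.1.le _),
    ← integral_of_le zero_le_one, integral_rpow (Or.inl (by linarith)), sub_add_cancel,
    Real.one_rpow, Real.zero_rpow hq.ne', sub_zero]

theorem lintegral_Ioi_one_rpow_neg_sub_one (hq : 0 < q) :
    ∫⁻ t in Ioi (1 : ℝ), ENNReal.ofReal (t ^ (-q - 1)) = ENNReal.ofReal (1 / q) := by
  rw [← ofReal_integral_eq_lintegral_ofReal
    (integrableOn_Ioi_rpow_of_lt (by linarith) zero_lt_one)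
    (ae_restrict_of_forall_mem measurableSet_Ioi fun t ht =>
      Real.rpow_nonneg (zero_lt_one.trans ht).le _),
    integral_Ioi_rpow_of_lt (by linarith) zero_lt_one, Real.one_rpow, sub_add_cancel,
    neg_div_neg_eq]

/-- The layer-cake integral is split at height `1`: below it the distribution function is at most
the total mass, above it at most `‖f‖_{p,∞}^p t^(-p)`. -/
theorem lintegral_abs_rpow_le_of_weakLpNorm (hf : AEMeasurable f μ) (hq : 0 < q) (hqp : q < p) :
    ∫⁻ x, ENNReal.ofReal (|f x| ^ q) ∂μ ≤
      μ univ + ENNReal.ofReal (q / (p - q)) * weakLpNorm μ p f ^ p := by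
  have hlow : ∫⁻ t in Ioc (0 : ℝ) 1, μ {x | t < |f x|} * ENNReal.ofReal (t ^ (q - 1)) ≤
      μ univ * ENNReal.ofReal (1 / q) := by
    rw [← lintegral_Ioc_zero_one_rpow_sub_one hq, ← lintegral_const_mul _ (by fun_prop)]
    gcongr
    exact subset_univ _
  have hhigh : ∫⁻ t in Ioi (1 : ℝ), μ {x | t < |f x|} * ENNReal.ofReal (t ^ (q - 1)) ≤
      weakLpNorm μ p f ^ p * ENNReal.ofReal (1 / (p - q)) := by
    rw [← lintegral_Ioi_one_rpow_neg_sub_one (sub_pos.2 hqp),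
      ← lintegral_const_mul _ (by fun_prop)]
    refine setLIntegral_mono' measurableSet_Ioi fun t ht => ?_
    have ht0 : 0 < t := zero_lt_one.trans ht
    calc μ {x | t < |f x|} * ENNReal.ofReal (t ^ (q - 1))
        ≤ weakLpNorm μ p f ^ p * ENNReal.ofReal (t ^ (-p)) * ENNReal.ofReal (t ^ (q - 1)) := by
          gcongr
          exact meas_lt_abs_le_weakLpNorm_rpow_mul (hq.trans hqp) ht0
      _ = weakLpNorm μ p f ^ p * ENNReal.ofReal (t ^ (-(p - q) - 1)) := by
          rw [mul_assoc, ← ENNReal.ofReal_mul (by positivity), ← Real.rpow_add ht0]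
          ring_nf
  rw [lintegral_rpow_eq_lintegral_meas_lt_mul μ (.of_forall fun x => abs_nonneg (f x))
      (by fun_prop) hq, ← Ioc_union_Ioi_eq_Ioi (zero_le_one' ℝ),
    lintegral_union measurableSet_Ioi (Ioc_disjoint_Ioi le_rfl)]
  calc _ ≤ ENNReal.ofReal q * (μ univ * ENNReal.ofReal (1 / q) +
        weakLpNorm μ p f ^ p * ENNReal.ofReal (1 / (p - q))) := by gcongr
    _ = μ univ * ENNReal.ofReal (q * (1 / q)) +
        ENNReal.ofReal (q * (1 / (p - q))) * weakLpNorm μ p f ^ p := by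
      rw [ENNReal.ofReal_mul hq.le, ENNReal.ofReal_mul hq.le]
      ring
    _ = _ := by rw [mul_one_div_cancel hq.ne', mul_one_div, ENNReal.ofReal_one, mul_one]

variable [IsFiniteMeasure μ]

theorem integrable_abs_rpow_of_weakLpNorm_ne_top (hf : AEMeasurable f μ) (hq : 0 < q)
    (hqp : q < p) (hN : weakLpNorm μ p f ≠ ∞) : Integrable (fun x => |f x| ^ q) μ := by
  refine ⟨(hf.abs.pow_const q).aestronglyMeasurable,
    (hasFiniteIntegral_iff_ofReal (.of_forall fun x => by positivity)).2 ?_⟩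
  refine (lintegral_abs_rpow_le_of_weakLpNorm hf hq hqp).trans_lt ?_
  have := ENNReal.rpow_ne_top_of_nonneg (hq.trans hqp).le hN
  finiteness

theorem integral_abs_rpow_le_of_weakLpNorm (hf : AEMeasurable f μ) (hq : 0 < q) (hqp : q < p)
    (hN : weakLpNorm μ p f ≠ ∞) :
    ∫ x, |f x| ^ q ∂μ ≤ μ.real univ + q / (p - q) * (weakLpNorm μ p f).toReal ^ p := by
  have hpq : 0 ≤ q / (p - q) := (div_pos hq (sub_pos.2 hqp)).le
  have hNp := ENNReal.rpow_ne_top_of_nonneg (hq.trans hqp).le hN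
  have hle := ENNReal.toReal_mono (by finiteness) (lintegral_abs_rpow_le_of_weakLpNorm hf hq hqp)
  rwa [ENNReal.toReal_add (by finiteness) (by finiteness), ENNReal.toReal_mul,
    ENNReal.toReal_ofReal hpq, ← ENNReal.toReal_rpow,
    ← integral_eq_lintegral_of_nonneg_ae (.of_forall fun x => by positivity)
      (hf.abs.pow_const q).aestronglyMeasurable] at hle

end WeakLp

theorem mul_integral_rpow_one_sub_le_of_weakLpNorm {X : Type*} [MeasurableSpace X] {μ : Measure X}
    [IsFiniteMeasure μ] {f : X → ℝ} (hf : AEMeasurable f μ) (hN : weakLpNorm μ 1 f ≠ ∞) {ε : ℝ}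
    (hε : ε ∈ Ioo (0 : ℝ) 1) :
    ε * ∫ x, |f x| ^ (1 - ε) ∂μ ≤ ε * μ.real univ + (weakLpNorm μ 1 f).toReal := by
  obtain ⟨hε0, hε1⟩ := hε
  have hbound := integral_abs_rpow_le_of_weakLpNorm hf (sub_pos.2 hε1) (by linarith) hN
  rw [_root_.sub_sub_cancel, Real.rpow_one] at hbound
  calc ε * ∫ x, |f x| ^ (1 - ε) ∂μ
      ≤ ε * (μ.real univ + (1 - ε) / ε * (weakLpNorm μ 1 f).toReal) := by gcongr
    _ = ε * μ.real univ + (1 - ε) * (weakLpNorm μ 1 f).toReal := by field_simp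
    _ ≤ ε * μ.real univ + (weakLpNorm μ 1 f).toReal := by
      gcongr
      exact mul_le_of_le_one_left toReal_nonneg (by linarith)

section IntervalIntegrable

variable {a b p q : ℝ} {k : ℝ → ℝ}

theorem intervalIntegrable_rpow_of_weakLpNorm_ne_top (hab : a ≤ b)
    (hk : AEMeasurable k (volume.restrict (Ioo a b))) (hk0 : ∀ σ ∈ Ioo a b, 0 ≤ k σ)
    (hq : 0 < q) (hqp : q < p) (hN : weakLpNorm (volume.restrict (Ioo a b)) p k ≠ ∞) :
    IntervalIntegrable (fun σ => k σ ^ q) volume a b := by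
  rw [intervalIntegrable_iff_integrableOn_Ioo_of_le hab]
  refine IntegrableOn.congr_fun (integrable_abs_rpow_of_weakLpNorm_ne_top hk hq hqp hN)
    (fun σ hσ => ?_) measurableSet_Ioo
  simp only [abs_of_nonneg (hk0 σ hσ)]

theorem intervalIntegrable_rpow_mul_rpow_of_weakLpNorm_ne_top {r : ℝ} {φ : ℝ → ℝ} (hab : a ≤ b)
    (hk : AEMeasurable k (volume.restrict (Ioo a b))) (hk0 : ∀ σ ∈ Ioo a b, 0 ≤ k σ)
    (hq : 0 < q) (hqp : q < p) (hN : weakLpNorm (volume.restrict (Ioo a b)) p k ≠ ∞)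
    (hr : 0 ≤ r) (hφ : ContinuousOn φ (Icc a b)) :
    IntervalIntegrable (fun σ => k σ ^ q * φ σ ^ r) volume a b := by
  refine (intervalIntegrable_rpow_of_weakLpNorm_ne_top hab hk hk0 hq hqp hN).mul_continuousOn ?_
  rw [uIcc_of_le hab]
  exact hφ.rpow_const fun _ _ => Or.inr hr

end IntervalIntegrable

theorem absolutelyContinuousOnInterval_comp_of_lipschitzOnWith {X Y : Type*} [PseudoMetricSpace X]
    [PseudoMetricSpace Y] {C : NNReal} {g : X → Y} {s : Set X} {f : ℝ → X} {a b : ℝ}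
    (hg : LipschitzOnWith C g s) (hf : AbsolutelyContinuousOnInterval f a b)
    (hfs : MapsTo f (uIcc a b) s) : AbsolutelyContinuousOnInterval (g ∘ f) a b := by
  refine squeeze_zero' (.of_forall fun E => Finset.sum_nonneg fun _ _ => dist_nonneg) ?_
    (by simpa only [mul_zero] using Filter.Tendsto.const_mul (C : ℝ) hf)
  filter_upwards [Filter.mem_inf_of_right (Filter.mem_principal_self _)] with E hE
  rw [Finset.mul_sum]
  exact Finset.sum_le_sum fun i hi =>
    hg.dist_le_mul _ (hfs (hE.1 i hi).1) _ (hfs (hE.1 i hi).2)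

section Bihari

variable {a b R : ℝ} {κ φ w G : ℝ → ℝ}

theorem lipschitzOnWith_of_hasDerivAt_inv {s : Set ℝ} {c : ℝ} (hs : Convex ℝ s) (hc : 0 < c)
    (hw : ∀ y ∈ s, c ≤ w y) (hG : ∀ y ∈ s, HasDerivAt G (w y)⁻¹ y) :
    LipschitzOnWith c⁻¹.toNNReal G s := by
  refine hs.lipschitzOnWith_of_nnnorm_hasDerivWithin_le
    (fun y hy => (hG y hy).hasDerivWithinAt) fun y hy => ?_
  have hwy := hc.trans_le (hw y hy)
  rw [← NNReal.coe_le_coe, coe_nnnorm, Real.norm_of_nonneg (by positivity),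
    Real.coe_toNNReal _ (by positivity)]
  exact inv_anti₀ hc (hw y hy)

/-- With `Y s = R + ∫ σ in a..s, κ σ * w (φ σ)`, the hypothesis reads `φ ≤ Y`, so that almost
everywhere `(G ∘ Y)' = κ * w φ / w Y ≤ κ`. -/
theorem bihari_lasalle (hab : a ≤ b) (hw : MonotoneOn w (Ici 0)) (hw0 : 0 ≤ w 0) (hR : 0 ≤ R)
    (hwR : 0 < w R) (hG : ∀ y ∈ Ici R, HasDerivAt G (w y)⁻¹ y)
    (hκ : IntervalIntegrable κ volume a b) (hκ0 : 0 ≤ᵐ[volume.restrict (Icc a b)] κ)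
    (hκφ : IntervalIntegrable (fun σ => κ σ * w (φ σ)) volume a b)
    (hφ0 : ∀ t ∈ Icc a b, 0 ≤ φ t)
    (hφ : ∀ t ∈ Icc a b, φ t ≤ R + ∫ σ in a..t, κ σ * w (φ σ)) :
    G (R + ∫ σ in a..b, κ σ * w (φ σ)) ≤ G R + ∫ σ in a..b, κ σ := by
  set Y : ℝ → ℝ := fun s => R + ∫ σ in a..s, κ σ * w (φ σ) with hY
  have hY_ac : AbsolutelyContinuousOnInterval Y a b :=
    contDiffOn_const.absolutelyContinuousOnInterval.add
      (hκφ.absolutelyContinuousOnInterval_intervalIntegral left_mem_uIcc)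
  have hRY : MapsTo Y (Icc a b) (Ici R) := fun s hs => by
    refine le_add_of_nonneg_right (integral_nonneg_of_ae_restrict hs.1 ?_)
    filter_upwards [ae_restrict_of_ae_restrict_of_subset (Icc_subset_Icc_right hs.2) hκ0,
      ae_restrict_mem measurableSet_Icc] with σ hσ0 hσ
    have hφσ := hφ0 σ (Icc_subset_Icc_right hs.2 hσ)
    exact mul_nonneg hσ0 (hw0.trans (hw self_mem_Ici hφσ hφσ))
  have hw_ge : ∀ y ∈ Ici R, w R ≤ w y := fun y hy => hw hR (hR.trans hy) hy
  have hG_lip := lipschitzOnWith_of_hasDerivAt_inv (convex_Ici R) hwR hw_ge hG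
  have hGY_ac : AbsolutelyContinuousOnInterval (G ∘ Y) a b :=
    absolutelyContinuousOnInterval_comp_of_lipschitzOnWith hG_lip hY_ac (by rwa [uIcc_of_le hab])
  have hderiv : deriv (G ∘ Y) ≤ᵐ[volume.restrict (Icc a b)] κ := by
    filter_upwards [ae_restrict_of_ae hκφ.ae_hasDerivAt_integral, hκ0,
      ae_restrict_mem measurableSet_Icc] with s hs hκs hsab
    have hYs : HasDerivAt Y (κ s * w (φ s)) s :=
      (hs (by rwa [uIcc_of_le hab]) a left_mem_uIcc).const_add R
    have hwY := hwR.trans_le (hw_ge _ (hRY hsab))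
    have hwφ : w (φ s) ≤ w (Y s) := hw (hφ0 s hsab) (hR.trans (hRY hsab)) (hφ s hsab)
    rw [((hG _ (hRY hsab)).comp s hYs).deriv, inv_mul_le_iff₀ hwY, mul_comm]
    exact mul_le_mul_of_nonneg_right hwφ hκs
  have hint := integral_mono_ae_restrict hab hGY_ac.intervalIntegrable_deriv hκ hderiv
  rw [hGY_ac.integral_deriv_eq_sub, sub_le_iff_le_add'] at hint
  simpa [hY] using hint

theorem le_rpow_of_le_add_integral_mul_rpow {p : ℝ} (hab : a ≤ b) (hR : 0 < R) (hp : 0 < p)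
    (hκ : IntervalIntegrable κ volume a b) (hκ0 : 0 ≤ᵐ[volume.restrict (Icc a b)] κ)
    (hκφ : IntervalIntegrable (fun σ => κ σ * φ σ ^ (1 + p)) volume a b)
    (hφ0 : ∀ t ∈ Icc a b, 0 ≤ φ t)
    (hφ : ∀ t ∈ Icc a b, φ t ≤ R + ∫ σ in a..t, κ σ * φ σ ^ (1 + p))
    (hlt : p * ∫ σ in a..b, κ σ < R ^ (-p)) :
    φ b ≤ (R ^ (-p) - p * ∫ σ in a..b, κ σ) ^ (-(1 / p)) := by
  set Y := R + ∫ σ in a..b, κ σ * φ σ ^ (1 + p)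
  have hG : ∀ y ∈ Ici R, HasDerivAt (fun y => -y ^ (-p) / p) (y ^ (1 + p))⁻¹ y := fun y hy => by
    have hy0 : 0 < y := hR.trans_le hy
    refine ((Real.hasDerivAt_rpow_const (p := -p) (Or.inl hy0.ne')).neg.div_const p).congr_deriv ?_
    rw [neg_mul, neg_neg, mul_div_cancel_left₀ _ hp.ne', ← Real.rpow_neg hy0.le]
    ring_nf
  have hGY : -Y ^ (-p) / p ≤ -R ^ (-p) / p + ∫ σ in a..b, κ σ :=
    bihari_lasalle hab
      (fun x hx y _ hxy => Real.rpow_le_rpow hx hxy (by positivity))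
      (Real.rpow_nonneg le_rfl _) hR.le (by positivity) hG hκ hκ0 hκφ hφ0 hφ
  have hYp : R ^ (-p) - p * ∫ σ in a..b, κ σ ≤ Y ^ (-p) := by
    field_simp at hGY
    linarith
  have hY0 : 0 ≤ Y := (hφ0 b (right_mem_Icc.2 hab)).trans (hφ b (right_mem_Icc.2 hab))
  calc φ b ≤ Y := hφ b (right_mem_Icc.2 hab)
    _ = (Y ^ (-p)) ^ (-(1 / p)) := by
        rw [← Real.rpow_mul hY0, neg_mul_neg, mul_one_div_cancel hp.ne', Real.rpow_one]
    _ ≤ _ := Real.rpow_le_rpow_of_nonpos (sub_pos.2 hlt) hYp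
        (by rw [neg_nonpos]; positivity)

end Bihari

section WeakL1Integral

open scoped Topology

variable {T A R δ ε t : ℝ} {k φ : ℝ → ℝ}

theorem two_mul_mul_integral_rpow_one_sub_lt (hA : 0 < A)
    (hk : AEMeasurable k (volume.restrict (Ioo 0 T))) (hk0 : ∀ σ ∈ Ioo 0 T, 0 ≤ k σ)
    (hkδ : ENNReal.ofReal (2 * A) * weakLpNorm (volume.restrict (Ioo 0 T)) 1 k
      < ENNReal.ofReal (1 - 3 * δ))
    (hε : ε ∈ Ioo (0 : ℝ) 1) (hAε : 2 * A * ε * T < δ) (hT : 0 ≤ T) :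
    2 * ε * ∫ σ in 0..T, A * k σ ^ (1 - ε) < 1 - 2 * δ := by
  have hN := (ENNReal.lt_top_of_mul_ne_top_right hkδ.ne_top (by simpa)).ne
  have hNδ := ENNReal.toReal_lt_of_lt_ofReal hkδ
  rw [ENNReal.toReal_mul, ENNReal.toReal_ofReal (by positivity)] at hNδ
  have hbound := mul_integral_rpow_one_sub_le_of_weakLpNorm hk hN hε
  have habs : ∫ σ in Ioo 0 T, |k σ| ^ (1 - ε) = ∫ σ in 0..T, k σ ^ (1 - ε) := by
    rw [integral_of_le hT, integral_Ioc_eq_integral_Ioo]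
    exact setIntegral_congr_fun measurableSet_Ioo fun σ hσ => by
      simp only [abs_of_nonneg (hk0 σ hσ)]
  have hmass : (volume.restrict (Ioo 0 T)).real univ = T := by simp [hT]
  rw [habs, hmass] at hbound
  rw [intervalIntegral.integral_const_mul]
  linarith [mul_le_mul_of_nonneg_left hbound (by positivity : 0 ≤ 2 * A)]

theorem le_rpow_of_weakL1_integral_inequality (hA : 0 < A) (hR : 0 < R)
    (hk : AEMeasurable k (volume.restrict (Ioo 0 T))) (hk0 : ∀ σ ∈ Ioo 0 T, 0 ≤ k σ)
    (hδ : 0 < δ)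
    (hkδ : ENNReal.ofReal (2 * A) * weakLpNorm (volume.restrict (Ioo 0 T)) 1 k
      < ENNReal.ofReal (1 - 3 * δ))
    (hε : ε ∈ Ioo (0 : ℝ) 1) (hRε : 1 - δ < R ^ (-(2 * ε))) (hAε : 2 * A * ε * T < δ)
    (hkφ : IntervalIntegrable (fun σ => k σ ^ (1 - ε) * φ σ ^ (1 + 2 * ε)) volume 0 T)
    (hφ0 : ∀ t ∈ Icc 0 T, 0 ≤ φ t)
    (hφ : ∀ t ∈ Icc 0 T, φ t ≤ R + A * ∫ σ in 0..t, k σ ^ (1 - ε) * φ σ ^ (1 + 2 * ε))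
    (ht : t ∈ Icc 0 T) : φ t ≤ δ ^ (-(1 / (2 * ε))) := by
  have hε0 := hε.1
  have hT : 0 ≤ T := ht.1.trans ht.2
  have hN := (ENNReal.lt_top_of_mul_ne_top_right hkδ.ne_top (by simpa)).ne
  set κ : ℝ → ℝ := fun σ => A * k σ ^ (1 - ε) with hκ_def
  have hκ : IntervalIntegrable κ volume 0 T :=
    (intervalIntegrable_rpow_of_weakLpNorm_ne_top hT hk hk0 (sub_pos.2 hε.2)
      (by linarith) hN).const_mul A
  have hκ0 : 0 ≤ᵐ[volume.restrict (Icc 0 T)] κ := by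
    rw [← restrict_Ioo_eq_restrict_Icc]
    exact ae_restrict_of_forall_mem measurableSet_Ioo fun σ hσ =>
      mul_nonneg hA.le (Real.rpow_nonneg (hk0 σ hσ) _)
  have hIcc : Icc 0 t ⊆ Icc 0 T := Icc_subset_Icc_right ht.2
  have hκt : 2 * ε * ∫ σ in 0..t, κ σ < 1 - 2 * δ := by
    refine lt_of_le_of_lt ?_ (two_mul_mul_integral_rpow_one_sub_lt hA hk hk0 hkδ hε hAε hT)
    gcongr
    exact integral_mono_interval le_rfl ht.1 ht.2
      (ae_restrict_of_ae_restrict_of_subset Ioc_subset_Icc_self hκ0) hκ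
  have huIcc : uIcc 0 t ⊆ uIcc 0 T := by rwa [uIcc_of_le ht.1, uIcc_of_le hT]
  calc φ t ≤ (R ^ (-(2 * ε)) - 2 * ε * ∫ σ in 0..t, κ σ) ^ (-(1 / (2 * ε))) := by
        refine le_rpow_of_le_add_integral_mul_rpow ht.1 hR (by positivity) (hκ.mono_set huIcc)
          (ae_restrict_of_ae_restrict_of_subset hIcc hκ0) ?_ (fun s hs => hφ0 s (hIcc hs))
          (fun s hs => ?_) (by linarith)
        · simpa only [hκ_def, mul_assoc] using (hkφ.const_mul A).mono_set huIcc
        · simpa only [hκ_def, mul_assoc, intervalIntegral.integral_const_mul] using hφ s (hIcc hs)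
    _ ≤ δ ^ (-(1 / (2 * ε))) :=
        Real.rpow_le_rpow_of_nonpos hδ (by linarith) (by rw [neg_nonpos]; positivity)

theorem exists_lt_ofReal_one_sub_three_mul {c : ℝ≥0∞} (hc : c < 1) :
    ∃ δ ∈ Ioo (0 : ℝ) (1 / 3), c < ENNReal.ofReal (1 - 3 * δ) := by
  have hlim : Filter.Tendsto (fun δ : ℝ => ENNReal.ofReal (1 - 3 * δ)) (𝓝[>] 0) (𝓝 1) :=
    tendsto_nhdsWithin_of_tendsto_nhds <| Continuous.tendsto'
      (ENNReal.continuous_ofReal.comp (by fun_prop)) _ _ (by simp)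
  have hmem : ∀ᶠ δ : ℝ in 𝓝[>] 0, δ ∈ Ioo (0 : ℝ) (1 / 3) := Ioo_mem_nhdsGT (by norm_num)
  exact (hmem.and (hlim.eventually_const_lt hc)).exists

theorem exists_one_sub_lt_rpow_and_mul_lt (A T : ℝ) (hR : 0 < R) (hδ : 0 < δ) :
    ∃ ε ∈ Ioo (0 : ℝ) 1, 1 - δ < R ^ (-(2 * ε)) ∧ 2 * A * ε * T < δ := by
  have hlim_rpow : Filter.Tendsto (fun ε : ℝ => R ^ (-(2 * ε))) (𝓝[>] 0) (𝓝 1) :=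
    tendsto_nhdsWithin_of_tendsto_nhds <| Continuous.tendsto'
      (continuous_const.rpow (by fun_prop) fun _ => Or.inl hR.ne') _ _ (by simp)
  have hlim_mul : Filter.Tendsto (fun ε : ℝ => 2 * A * ε * T) (𝓝[>] 0) (𝓝 0) :=
    tendsto_nhdsWithin_of_tendsto_nhds (Continuous.tendsto' (by fun_prop) _ _ (by simp))
  have hmem : ∀ᶠ ε : ℝ in 𝓝[>] 0, ε ∈ Ioo (0 : ℝ) 1 := Ioo_mem_nhdsGT one_pos
  exact (hmem.and ((hlim_rpow.eventually_const_lt (by linarith)).and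
    (hlim_mul.eventually_lt_const hδ))).exists

theorem bounded_of_weakL1_integral_inequality_general (hA : 0 < A) (hR : 0 < R)
    (hk : AEMeasurable k (volume.restrict (Ioo 0 T))) (hk0 : ∀ σ ∈ Ioo 0 T, 0 ≤ k σ)
    (hkW : ENNReal.ofReal (2 * A) * weakLpNorm (volume.restrict (Ioo 0 T)) 1 k < 1)
    (hkφ : ∀ ε ∈ Ioo (0 : ℝ) 1,
      IntervalIntegrable (fun σ => k σ ^ (1 - ε) * φ σ ^ (1 + 2 * ε)) volume 0 T)
    (hφ0 : ∀ t ∈ Icc 0 T, 0 ≤ φ t)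
    (hφ : ∀ ε ∈ Ioo (0 : ℝ) 1, ∀ t ∈ Icc 0 T,
      φ t ≤ R + A * ∫ σ in 0..t, k σ ^ (1 - ε) * φ σ ^ (1 + 2 * ε)) :
    (∃ M : ℝ, ∀ t ∈ Icc 0 T, φ t ≤ M) ∧
      ∀ δ ∈ Ioo (0 : ℝ) (1 / 3),
        ENNReal.ofReal (2 * A) * weakLpNorm (volume.restrict (Ioo 0 T)) 1 k
            < ENNReal.ofReal (1 - 3 * δ) →
          ∀ ε ∈ Ioo (0 : ℝ) 1, 1 - δ < R ^ (-(2 * ε)) → 2 * A * ε * T < δ →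
            ∀ t ∈ Icc 0 T, φ t ≤ δ ^ (-(1 / (2 * ε))) := by
  refine ⟨?_, fun δ hδ hkδ ε hε hRε hAε t => le_rpow_of_weakL1_integral_inequality hA hR hk hk0
    hδ.1 hkδ hε hRε hAε (hkφ ε hε) hφ0 (hφ ε hε)⟩
  obtain ⟨δ, hδ, hkδ⟩ := exists_lt_ofReal_one_sub_three_mul hkW
  obtain ⟨ε, hε, hRε, hAε⟩ := exists_one_sub_lt_rpow_and_mul_lt A T hR hδ.1
  exact ⟨_, fun t => le_rpow_of_weakL1_integral_inequality hA hR hk hk0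
    hδ.1 hkδ hε hRε hAε (hkφ ε hε) hφ0 (hφ ε hε)⟩

end WeakL1Integral

/-- Let `T > 0`, `A > 0`, `R > 0`, let `k : (0,T) → [0,∞)` be measurable with finite
weak-`L¹` quasinorm satisfying `2A‖k‖_{1,∞} < 1`. Let `φ : [0,T] → [0,∞)` be continuous with
`φ(t) ≤ R + A ∫_0^t k(σ)^(1-ε) φ(σ)^(1+2ε) dσ` on `[0,T]` for every `ε ∈ (0,1)`.
Then `φ` is bounded on `[0,T]`; more precisely, for any `δ ∈ (0,1/3)` with
`2A‖k‖_{1,∞} < 1 - 3δ`, any `ε ∈ (0,1)` small enough that `1 - δ < R^(-2ε)` and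
`2AεT < δ` satisfies `φ(t) ≤ δ^(-1/(2ε))` for all `t ∈ [0,T]`. -/
theorem bounded_of_weakL1_integral_inequality
    (T A R : ℝ) (hT : 0 < T) (hA : 0 < A) (hR : 0 < R)
    (k : ℝ → ℝ) (hk : Measurable k) (hk0 : ∀ σ ∈ Ioo (0 : ℝ) T, 0 ≤ k σ)
    (hkW : ENNReal.ofReal (2 * A) * weakLpNorm (volume.restrict (Ioo (0 : ℝ) T)) 1 k < 1)
    (φ : ℝ → ℝ) (hφc : ContinuousOn φ (Icc 0 T)) (hφ0 : ∀ t ∈ Icc (0 : ℝ) T, 0 ≤ φ t)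
    (hφ : ∀ ε ∈ Ioo (0 : ℝ) 1, ∀ t ∈ Icc (0 : ℝ) T,
      φ t ≤ R + A * ∫ σ in (0 : ℝ)..t, k σ ^ (1 - ε) * φ σ ^ (1 + 2 * ε)) :
    (∃ M : ℝ, ∀ t ∈ Icc (0 : ℝ) T, φ t ≤ M) ∧
      ∀ δ ∈ Ioo (0 : ℝ) (1 / 3),
        ENNReal.ofReal (2 * A) * weakLpNorm (volume.restrict (Ioo (0 : ℝ) T)) 1 k
            < ENNReal.ofReal (1 - 3 * δ) →
          ∀ ε ∈ Ioo (0 : ℝ) 1, 1 - δ < R ^ (-(2 * ε)) → 2 * A * ε * T < δ →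
            ∀ t ∈ Icc (0 : ℝ) T, φ t ≤ δ ^ (-(1 / (2 * ε))) := by
  have hN := (ENNReal.lt_top_of_mul_ne_top_right hkW.ne_top (by simpa)).ne
  exact bounded_of_weakL1_integral_inequality_general hA hR hk.aemeasurable hk0 hkW
    (fun ε ⟨hε0, hε1⟩ => intervalIntegrable_rpow_mul_rpow_of_weakLpNorm_ne_top hT.le
      hk.aemeasurable hk0 (sub_pos.2 hε1) (by linarith) hN (by linarith) hφc) hφ0 hφ
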